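/- Let G be a connected graph on n vertices and ℓ(G) the number of vertices of a longest induced path of G. Then ν(G) ≥ ⌊ℓ(G)/2⌋ and g_{I(G)}(k) ≤ ⌈(3n-2ℓ(G))/3⌉ - k for 1 ≤ k ≤ ⌈ℓ(G)/3⌉, and g_{I(G)}(k) ≤ n - ℓ(G) for ⌈ℓ(G)/3⌉ < k ≤ ⌊ℓ(G)/2⌋. -/

import Mathlib

open scoped Classical
open MvPolynomial RingTheory

noncomputable section

/-- `M` is a matching of `G`. -/
def IsMatchingSet {V : Type*} (G : SimpleGraph V) (M : Finset (Sym2 V)) : Prop :=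
  (∀ e ∈ M, e ∈ G.edgeSet) ∧
    ∀ e ∈ M, ∀ f ∈ M, e ≠ f → ∀ v : V, v ∈ e → v ∉ f

/-- The matching number `ν(G)`. -/
def matchingNumber {V : Type*} [Fintype V] (G : SimpleGraph V) : ℕ :=
  sSup {k | ∃ M : Finset (Sym2 V), IsMatchingSet G M ∧ M.card = k}

/-- The `k`-th squarefree power `I(G)^{[k]}` of the edge ideal of a graph `G` on `Fin n`:
the ideal generated by the monomials `x_{V(M)}` for all `k`-matchings `M` of `G`.
For `k = 0` this is the unit ideal. -/
def edgeIdealSqPow (K : Type*) [Field K] {n : ℕ} (G : SimpleGraph (Fin n)) (k : ℕ) :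
    Ideal (MvPolynomial (Fin n) K) :=
  Ideal.span {f | ∃ M : Finset (Sym2 (Fin n)), IsMatchingSet G M ∧ M.card = k ∧
    f = ∏ v ∈ Finset.univ.filter (fun v => ∃ e ∈ M, v ∈ e), X v}

/-- The graded maximal ideal `(x_1, …, x_n)` of the polynomial ring. -/
def maxIdeal (K : Type*) [Field K] (n : ℕ) : Ideal (MvPolynomial (Fin n) K) :=
  Ideal.span (Set.range X)

/-- The depth of `S/I` : the maximum length of an `S/I`-regular sequence contained in
the graded maximal ideal. -/
def depthQuot {K : Type*} [Field K] {n : ℕ} (I : Ideal (MvPolynomial (Fin n) K)) : ℕ :=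
  sSup {d | ∃ rs : List (MvPolynomial (Fin n) K), rs.length = d ∧
    (∀ r ∈ rs, r ∈ maxIdeal K n) ∧
    RingTheory.Sequence.IsRegular (MvPolynomial (Fin n) K ⧸ I) rs}

/-- The normalized depth function of the edge ideal of `G`:
`g_{I(G)}(k) = depth(S/I(G)^{[k]}) - (2k-1)`. -/
def gEdge (K : Type*) [Field K] {n : ℕ} (G : SimpleGraph (Fin n)) (k : ℕ) : ℤ :=
  (depthQuot (edgeIdealSqPow K G k) : ℤ) - (2 * k - 1)


/-- `p 0, …, p (r-1)` is an induced path in `G`. -/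
def IsInducedPath {V : Type*} (G : SimpleGraph V) {r : ℕ} (p : Fin r → V) : Prop :=
  Function.Injective p ∧
    ∀ i j : Fin r, G.Adj (p i) (p j) ↔ ((i : ℕ) + 1 = j ∨ (j : ℕ) + 1 = i)

/-- `ℓ(G)`: the number of vertices of a longest induced path of `G`. -/
def longestInducedPath {V : Type*} [Fintype V] (G : SimpleGraph V) : ℕ :=
  sSup {r | ∃ p : Fin r → V, IsInducedPath G p}

/-! A nonzero class of cochain degree `d` in the Koszul cohomology of `S ⧸ I` bounds the depth of
`S ⧸ I` by `d`. For a squarefree monomial ideal such a class lives in a single multidegree, where it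
is a combinatorial object: a cochain whose coboundary is supported on nonfaces and which pairs
nontrivially with a cycle supported on faces.

For `I(G)^{[k]}` take `N` vertex-disjoint stars with union `W`, each with a marked edge, and choose
`k` of them. The cycle is the join of the boundary of the simplex on the chosen marked edges with
the `0`-spheres on the other marked edges. If no edge of `G` joins one of the latter to another
marked edge, a matching inside a face of the cycle can only use the chosen marked edges, not all of
whose vertices are present, so it has fewer than `k` edges. The dual cochain is the product of all
centers, the sums of leaves of `k - 1` chosen stars, and the vertices outside `W`. Its coboundary is
multiplication by the sum of all vertices of `W`, which adds a leaf of one more star and therefore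
produces a `k`-matching. So the depth is at most `(n - |W|) + N + (k - 1)`. On an induced path the
stars are blocks of two or three consecutive vertices, and the blocks of three satisfy the
condition on unchosen stars. -/

section Koszul

variable {ι R M N : Type*} [LinearOrder ι] [CommRing R]
  [AddCommGroup M] [Module R M] [AddCommGroup N] [Module R N]

/-- The sign with which `v` moves to its place in the increasingly ordered exterior monomial
indexed by `T`. -/
def koszulSign (v : ι) (T : Finset ι) : ℤ := (-1) ^ (T.filter (· < v)).card

lemma koszulSign_mul_self (v : ι) (T : Finset ι) : koszulSign v T * koszulSign v T = 1 := by
  simp [koszulSign, ← mul_pow]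

lemma koszulSign_insert (v : ι) {w : ι} {T : Finset ι} (hw : w ∉ T) :
    koszulSign v (insert w T) = (if w < v then -1 else 1) * koszulSign v T := by
  simp only [koszulSign, Finset.filter_insert]
  split_ifs
  · rw [Finset.card_insert_of_notMem (by simp [hw]), pow_succ']
  · rw [one_mul]

lemma koszulSign_erase (v : ι) {w : ι} {T : Finset ι} (hw : w ∈ T) :
    koszulSign v (T.erase w) = (if w < v then -1 else 1) * koszulSign v T := by
  rw [← Finset.insert_erase hw, koszulSign_insert v (Finset.notMem_erase w T),
    Finset.erase_insert_eq_erase, Finset.erase_idem]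
  split_ifs <;> ring

lemma koszulSign_mul_erase {v w : ι} {T : Finset ι} (hv : v ∈ T) (hw : w ∈ T) (hvw : v ≠ w) :
    koszulSign v T * koszulSign w (T.erase v) = -(koszulSign w T * koszulSign v (T.erase w)) := by
  rw [koszulSign_erase w hv, koszulSign_erase v hw]
  rcases hvw.lt_or_gt with h | h <;> simp [h, h.not_gt, mul_comm]

lemma koszulSign_mul_insert {v w : ι} {T : Finset ι} (hv : v ∈ T) (hw : w ∉ T) :
    koszulSign w T * koszulSign v (insert w T) = -(koszulSign v T * koszulSign w (T.erase v)) := by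
  rw [koszulSign_erase w hv, koszulSign_insert v hw]
  rcases (ne_of_mem_of_not_mem hv hw).lt_or_gt with h | h <;> simp [h, h.not_gt, mul_comm]

/-- Exterior multiplication by the vector `x`. A function `Finset ι → M` stands for an element
of `M ⊗ ⋀ Rⁿ`, given by its coordinates in the basis of exterior monomials; so `wedge x` is
the differential of the Koszul cochain complex of `x` on `M`. -/
def wedge : (ι → R) →ₗ[R] (Finset ι → M) →ₗ[R] (Finset ι → M) :=
  LinearMap.mk₂ R (fun x f T => ∑ v ∈ T, koszulSign v T • x v • f (T.erase v))
    (fun x y f => by ext; simp [add_smul, Finset.sum_add_distrib])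
    (fun a x f => by ext; simp [mul_smul, Finset.smul_sum, smul_comm a])
    (fun x f g => by ext; simp [Finset.sum_add_distrib])
    (fun a x f => by ext; simp [Finset.smul_sum, smul_comm a])

lemma wedge_apply (x : ι → R) (f : Finset ι → M) (T : Finset ι) :
    wedge x f T = ∑ v ∈ T, koszulSign v T • x v • f (T.erase v) := rfl

lemma exists_of_wedge_ne_zero {x : ι → R} {f : Finset ι → M} {T : Finset ι}
    (h : wedge x f T ≠ 0) : ∃ v ∈ T, x v ≠ 0 ∧ f (T.erase v) ≠ 0 := by
  obtain ⟨v, hv, hne⟩ := Finset.exists_ne_zero_of_sum_ne_zero h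
  exact ⟨v, hv, fun h0 => hne (by simp [h0]), fun h0 => hne (by simp [h0])⟩

lemma wedge_comp (g : M →ₗ[R] N) (x : ι → R) (f : Finset ι → M) :
    wedge x (g ∘ f) = g ∘ wedge x f := by
  ext T
  simp [wedge_apply]

lemma wedge_self (x : ι → R) (f : Finset ι → M) : wedge x (wedge x f) = 0 := by
  ext T
  simp only [wedge_apply, Finset.smul_sum, Pi.zero_apply, Finset.sum_sigma']
  refine Finset.sum_involution (fun p _ => ⟨p.2, p.1⟩) ?_ ?_ ?_ (fun _ _ => rfl)
  · rintro ⟨v, w⟩ hp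
    obtain ⟨hv, hwv, hw⟩ : v ∈ T ∧ w ≠ v ∧ w ∈ T := by simpa using hp
    have hsign := koszulSign_mul_erase hv hw hwv.symm
    dsimp only
    rw [Finset.erase_right_comm, smul_comm (x v), smul_comm (x w), smul_comm (x w) (x v),
      smul_smul (koszulSign v T), hsign, smul_smul (koszulSign w T), neg_smul, neg_add_cancel]
  · rintro ⟨v, w⟩ hp - heq
    simp only [Finset.mem_sigma, Finset.mem_erase] at hp
    exact hp.2.1 (congrArg Sigma.fst heq)
  · rintro ⟨v, w⟩ hp
    simp only [Finset.mem_sigma, Finset.mem_erase] at hp ⊢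
    exact ⟨hp.2.2, hp.2.1.symm, hp.1⟩

lemma wedge_wedge (x y : ι → R) (f : Finset ι → M) :
    wedge x (wedge y f) = -wedge y (wedge x f) := by
  have h := wedge_self (x + y) f
  simp only [map_add, LinearMap.add_apply, wedge_self, zero_add, add_zero] at h
  exact eq_neg_of_add_eq_zero_right h

variable [Fintype ι]

/-- Interior multiplication by the vector `y`, on the same coordinates as `wedge`. -/
def contract : (ι → R) →ₗ[R] (Finset ι → M) →ₗ[R] (Finset ι → M) :=
  LinearMap.mk₂ R (fun y f T => ∑ v ∈ Tᶜ, koszulSign v T • y v • f (insert v T))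
    (fun x y f => by ext; simp [add_smul, Finset.sum_add_distrib])
    (fun a x f => by ext; simp [mul_smul, Finset.smul_sum, smul_comm a])
    (fun x f g => by ext; simp [Finset.sum_add_distrib])
    (fun a x f => by ext; simp [Finset.smul_sum, smul_comm a])

lemma contract_apply (y : ι → R) (f : Finset ι → M) (T : Finset ι) :
    contract y f T = ∑ v ∈ Tᶜ, koszulSign v T • y v • f (insert v T) := rfl

lemma exists_of_contract_ne_zero {y : ι → R} {f : Finset ι → M} {T : Finset ι}
    (h : contract y f T ≠ 0) : ∃ v ∉ T, y v ≠ 0 ∧ f (insert v T) ≠ 0 := by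
  obtain ⟨v, hv, hne⟩ := Finset.exists_ne_zero_of_sum_ne_zero h
  exact ⟨v, Finset.mem_compl.mp hv, fun h0 => hne (by simp [h0]), fun h0 => hne (by simp [h0])⟩

lemma wedge_contract_apply (x y : ι → R) (f : Finset ι → M) (T : Finset ι) :
    wedge x (contract y f) T = ∑ v ∈ T, (x v * y v) • f T + ∑ v ∈ T, ∑ w ∈ Tᶜ,
      (koszulSign v T * koszulSign w (T.erase v)) • x v • y w • f (insert w (T.erase v)) := by
  rw [wedge_apply, ← Finset.sum_add_distrib]
  refine Finset.sum_congr rfl fun v hv => ?_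
  rw [contract_apply, Finset.compl_erase, Finset.sum_insert (by simpa using hv),
    Finset.insert_erase hv, koszulSign_erase v hv]
  simp only [lt_irrefl, if_false, one_mul, smul_add, Finset.smul_sum, mul_smul,
    smul_comm (x v) (koszulSign _ _)]
  rw [smul_smul, koszulSign_mul_self, one_smul]

lemma contract_wedge_apply (x y : ι → R) (f : Finset ι → M) (T : Finset ι) :
    contract y (wedge x f) T = ∑ w ∈ Tᶜ, (x w * y w) • f T + ∑ v ∈ T, ∑ w ∈ Tᶜ,
      (koszulSign w T * koszulSign v (insert w T)) • x v • y w • f ((insert w T).erase v) := by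
  rw [contract_apply, Finset.sum_comm, ← Finset.sum_add_distrib]
  refine Finset.sum_congr rfl fun w hw => ?_
  rw [Finset.mem_compl] at hw
  rw [wedge_apply, Finset.sum_insert hw, Finset.erase_insert hw, koszulSign_insert w hw]
  simp only [lt_irrefl, if_false, one_mul, smul_add, Finset.smul_sum, mul_smul,
    smul_comm (y w) (koszulSign _ _), smul_comm (y w) (x _)]
  rw [smul_smul, koszulSign_mul_self, one_smul]

lemma wedge_contract (x y : ι → R) (f : Finset ι → M) :
    wedge x (contract y f) + contract y (wedge x f) = (x ⬝ᵥ y) • f := by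
  ext T
  have hcancel : ∀ v ∈ T, ∀ w ∈ Tᶜ,
      (koszulSign v T * koszulSign w (T.erase v)) • x v • y w • f (insert w (T.erase v)) +
        (koszulSign w T * koszulSign v (insert w T)) • x v • y w • f ((insert w T).erase v) =
          0 := by
    intro v hv w hw
    rw [Finset.mem_compl] at hw
    rw [koszulSign_mul_insert hv hw, Finset.erase_insert_of_ne (ne_of_mem_of_not_mem hv hw).symm,
      neg_smul, add_neg_cancel]
  rw [Pi.add_apply, wedge_contract_apply, contract_wedge_apply, add_add_add_comm,
    Finset.sum_add_sum_compl, ← Finset.sum_add_distrib, Finset.sum_eq_zero (s := T), add_zero,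
    ← Finset.sum_smul]
  · rfl
  · intro v hv
    rw [← Finset.sum_add_distrib]
    exact Finset.sum_eq_zero (hcancel v hv)

lemma wedge_dotProduct (x : ι → R) (f g : Finset ι → R) :
    wedge x f ⬝ᵥ g = f ⬝ᵥ contract x g := by
  simp only [dotProduct, wedge_apply, contract_apply, Finset.sum_mul, Finset.mul_sum,
    Finset.sum_sigma']
  refine Finset.sum_bij' (fun p _ => ⟨p.1.erase p.2, p.2⟩) (fun p _ => ⟨insert p.2 p.1, p.2⟩)
    ?_ ?_ ?_ ?_ ?_
  · simp
  · simp
  · rintro ⟨T, v⟩ hp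
    simp_all
  · rintro ⟨T, v⟩ hp
    simp_all
  · rintro ⟨T, v⟩ hp
    replace hp : v ∈ T := by simpa using hp
    simp only [Finset.insert_erase hp, koszulSign_erase v hp, lt_irrefl, if_false, one_mul,
      zsmul_eq_mul, smul_eq_mul]
    ring

lemma contract_self (y : ι → R) (f : Finset ι → R) : contract y (contract y f) = 0 := by
  refine dotProduct_eq_zero _ fun g => ?_
  rw [dotProduct_comm, ← wedge_dotProduct, ← wedge_dotProduct, wedge_self, zero_dotProduct]

end Koszul

section Regular

open scoped Pointwise

variable {ι R M : Type*} [LinearOrder ι] [CommRing R] [AddCommGroup M] [Module R M]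
  {x : ι → R} {u : Finset ι → M}

lemma wedge_contract_of_wedge_eq_zero [Fintype ι] (hu : wedge x u = 0) (a : ι → R) :
    wedge x (contract a u) = (x ⬝ᵥ a) • u := by
  simpa [hu] using wedge_contract x a u

lemma exists_eq_wedge_of_mkQ_contract_eq_wedge [Fintype ι] {a : ι → R}
    (hreg : IsSMulRegular M (x ⬝ᵥ a)) (hu : wedge x u = 0) {z : Finset ι → QuotSMulTop (x ⬝ᵥ a) M}
    (hz : Submodule.mkQ _ ∘ contract a u = wedge x z) : ∃ y, u = wedge x y := by
  obtain ⟨z, rfl⟩ := (Submodule.mkQ_surjective ((x ⬝ᵥ a) • (⊤ : Submodule R M))).comp_left z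
  have hdiff : ∀ T, ∃ y, (x ⬝ᵥ a) • y = contract a u T - wedge x z T := by
    intro T
    rw [wedge_comp] at hz
    simpa [Submodule.mem_smul_pointwise_iff_exists] using
      (Submodule.Quotient.eq _).mp (congrFun hz T)
  choose y hy using hdiff
  have hcontract : contract a u = wedge x z + (x ⬝ᵥ a) • y := by
    ext T
    simp [hy]
  have hsmul : (x ⬝ᵥ a) • u = (x ⬝ᵥ a) • wedge x y := by
    rw [← wedge_contract_of_wedge_eq_zero hu, hcontract, map_add, wedge_self, zero_add, map_smul]
  exact ⟨y, funext fun T => hreg (congrFun hsmul T)⟩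

theorem length_le_of_wedge_eq_zero [Finite ι] {rs : List R}
    (hspan : ∀ r ∈ rs, r ∈ Submodule.span R (Set.range x)) (hreg : Sequence.IsWeaklyRegular M rs)
    (hu : wedge x u = 0) (hne : ∀ y, u ≠ wedge x y) {d : ℕ} (hd : ∀ T, u T ≠ 0 → T.card ≤ d) :
    rs.length ≤ d := by
  have := Fintype.ofFinite ι
  induction rs generalizing M d with
  | nil => exact Nat.zero_le d
  | cons r rs ih =>
    obtain ⟨hr, hrs⟩ := (Sequence.isWeaklyRegular_cons_iff M r rs).mp hreg
    obtain ⟨a, ha⟩ := (Submodule.mem_span_range_iff_exists_fun R).mp (hspan r List.mem_cons_self)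
    obtain rfl : x ⬝ᵥ a = r := by simpa [dotProduct, mul_comm] using ha
    set π := Submodule.mkQ ((x ⬝ᵥ a) • (⊤ : Submodule R M))
    have hcocycle : wedge x (π ∘ contract a u) = 0 := by
      rw [wedge_comp, wedge_contract_of_wedge_eq_zero hu]
      ext T
      exact (Submodule.Quotient.mk_eq_zero _).mpr
        (Submodule.smul_mem_pointwise_smul _ _ _ Submodule.mem_top)
    have hclass : ∀ z, π ∘ contract a u ≠ wedge x z := fun z hz =>
      (exists_eq_wedge_of_mkQ_contract_eq_wedge hr hu hz).elim hne
    have hdeg : ∀ T, (π ∘ contract a u) T ≠ 0 → T.card + 1 ≤ d := by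
      intro T hT
      obtain ⟨v, hv, -, huT⟩ := exists_of_contract_ne_zero (y := a) (f := u) (T := T)
        fun h => hT (by rw [Function.comp_apply, h, map_zero])
      rw [← Finset.card_insert_of_notMem hv]
      exact hd _ huT
    obtain ⟨T, hT⟩ := Function.ne_iff.mp fun h => hclass 0 (h.trans (map_zero _).symm)
    have hlen := ih (fun s hs => hspan s (List.mem_cons_of_mem _ hs)) hrs hcocycle hclass
      (fun T hT => Nat.le_sub_one_of_lt (hdeg T hT))
    have hpos := hdeg T hT
    simp only [List.length_cons]
    omega

end Regular

section Squarefree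

variable {σ K : Type*}

/-- The characteristic vector of `W`. -/
def charVec (R : Type*) [CommRing R] [DecidableEq σ] (W : Finset σ) : σ → R :=
  fun v => if v ∈ W then 1 else 0

/-- The exponent vector of the squarefree monomial `∏ v ∈ T, X v`. -/
def squarefreeExp (T : Finset σ) : σ →₀ ℕ := ∑ v ∈ T, Finsupp.single v 1

lemma squarefreeExp_apply [DecidableEq σ] (T : Finset σ) (v : σ) :
    squarefreeExp T v = if v ∈ T then 1 else 0 := by
  simp [squarefreeExp, Finsupp.finsetSum_apply, Finsupp.single_apply]

lemma squarefreeExp_le_iff {s T : Finset σ} : squarefreeExp s ≤ squarefreeExp T ↔ s ⊆ T := by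
  refine forall_congr' fun v => ?_
  rw [squarefreeExp_apply, squarefreeExp_apply]
  by_cases hs : v ∈ s <;> by_cases hT : v ∈ T <;> simp [hs, hT]

lemma squarefreeExp_erase_add [DecidableEq σ] {T : Finset σ} {v : σ} (hv : v ∈ T) :
    squarefreeExp (T.erase v) + Finsupp.single v 1 = squarefreeExp T :=
  Finset.sum_erase_add T _ hv

/-- The squarefree monomial ideal generated by the products `∏ v ∈ s, X v` with `s ∈ 𝓝`; for
upward closed `𝓝` it is the Stanley–Reisner ideal of the complex with set of nonfaces `𝓝`. -/
def squarefreeIdeal (K : Type*) [CommRing K] (𝓝 : Set (Finset σ)) : Ideal (MvPolynomial σ K) :=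
  Ideal.span ((fun s : Finset σ => ∏ v ∈ s, X v) '' 𝓝)

section Ideal

variable [CommRing K] {𝓝 : Set (Finset σ)}

lemma squarefreeIdeal_eq_span_monomial :
    squarefreeIdeal K 𝓝 = Ideal.span ((fun e => monomial e (1 : K)) '' (squarefreeExp '' 𝓝)) := by
  simp only [squarefreeIdeal, Set.image_image, squarefreeExp, monomial_sum_one, X]

lemma monomial_mem_squarefreeIdeal {s T : Finset σ} (hs : s ∈ 𝓝) (hsT : s ⊆ T) (a : K) :
    monomial (squarefreeExp T) a ∈ squarefreeIdeal K 𝓝 := by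
  rw [squarefreeIdeal_eq_span_monomial, mem_ideal_span_monomial_image]
  intro e he
  rw [Finset.mem_singleton.mp (support_monomial_subset he)]
  exact ⟨_, ⟨s, hs, rfl⟩, squarefreeExp_le_iff.mpr hsT⟩

lemma exists_subset_of_mem_squarefreeIdeal {p : MvPolynomial σ K} (hp : p ∈ squarefreeIdeal K 𝓝)
    {T : Finset σ} (hT : coeff (squarefreeExp T) p ≠ 0) : ∃ s ∈ 𝓝, s ⊆ T := by
  rw [squarefreeIdeal_eq_span_monomial, mem_ideal_span_monomial_image] at hp
  obtain ⟨_, ⟨s, hs, rfl⟩, hle⟩ := hp _ (mem_support_iff.mpr hT)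
  exact ⟨s, hs, squarefreeExp_le_iff.mp hle⟩

end Ideal

section Strand

variable [LinearOrder σ] [CommRing K] (W : Finset σ)

/-- The Koszul cochain over the polynomial ring whose coordinate at `T` is the multiple `f T` of
the monomial `∏ v ∈ T ∩ W, X v`. If `f` lives on sets containing `Wᶜ`, this is the embedding of
the strand of multidegree `-Wᶜ`. -/
def strandLift (f : Finset σ → K) (T : Finset σ) : MvPolynomial σ K :=
  monomial (squarefreeExp (T ∩ W)) (f T)

/-- The coefficients read off by `strandLift W`. -/
def strandCoeff (g : Finset σ → MvPolynomial σ K) (T : Finset σ) : K :=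
  coeff (squarefreeExp (T ∩ W)) (g T)

lemma strandCoeff_strandLift (f : Finset σ → K) : strandCoeff W (strandLift W f) = f := by
  ext T
  simp [strandCoeff, strandLift]

lemma strandCoeff_sub (f g : Finset σ → MvPolynomial σ K) :
    strandCoeff W (f - g) = strandCoeff W f - strandCoeff W g := by
  ext T
  simp [strandCoeff]

lemma strandCoeff_wedge_X (g : Finset σ → MvPolynomial σ K) :
    strandCoeff W (wedge (X : σ → MvPolynomial σ K) g) = wedge (charVec K W) (strandCoeff W g) := by
  ext T
  simp only [strandCoeff, wedge_apply, coeff_sum, coeff_smul, charVec]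
  refine Finset.sum_congr rfl fun v hv => ?_
  rw [smul_eq_mul, mul_comm, coeff_mul_X']
  by_cases hvW : v ∈ W
  · simp [hv, hvW, squarefreeExp_apply, Finset.erase_inter,
      ← squarefreeExp_erase_add (Finset.mem_inter.mpr ⟨hv, hvW⟩)]
  · simp [hvW, squarefreeExp_apply]

variable [Fintype σ] {W}

lemma wedge_X_strandLift {f : Finset σ → K} (hf : ∀ T, f T ≠ 0 → Wᶜ ⊆ T) :
    wedge (X : σ → MvPolynomial σ K) (strandLift W f) = strandLift W (wedge (charVec K W) f) := by
  ext1 T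
  simp only [strandLift, wedge_apply, map_sum, map_zsmul, charVec]
  refine Finset.sum_congr rfl fun v hv => ?_
  by_cases hvW : v ∈ W
  · rw [Finset.erase_inter, ← squarefreeExp_erase_add (Finset.mem_inter.mpr ⟨hv, hvW⟩), if_pos hvW,
      one_smul, smul_eq_mul, X, mul_comm, monomial_mul, mul_one]
  · have hzero : f (T.erase v) = 0 := by
      by_contra hne
      exact Finset.notMem_erase v T (hf _ hne (Finset.mem_compl.mpr hvW))
    simp [hzero]

end Strand

variable [Field K] {n : ℕ} {𝓝 : Set (Finset (Fin n))} {W : Finset (Fin n)}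
  {u z : Finset (Fin n) → K}

lemma strandCoeff_dotProduct_eq_zero {g : Finset (Fin n) → MvPolynomial (Fin n) K}
    (hg : ∀ T, g T ∈ squarefreeIdeal K 𝓝) (hface : ∀ T, z T ≠ 0 → ∀ s ∈ 𝓝, ¬ s ⊆ T ∩ W) :
    strandCoeff W g ⬝ᵥ z = 0 := by
  refine Finset.sum_eq_zero fun T _ => by_contra fun hne => ?_
  obtain ⟨s, hs, hsT⟩ := exists_subset_of_mem_squarefreeIdeal (hg T) (left_ne_zero_of_mul hne)
  exact hface T (right_ne_zero_of_mul hne) s hs hsT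

/-- The upper bound half of Hochster's formula for depth: `u` gives a class of cochain degree at
most `d` in the Koszul cohomology of `S ⧸ I`, detected by the cycle `z`. -/
theorem depthQuot_squarefreeIdeal_le {d : ℕ} (hcompl : ∀ T, u T ≠ 0 → Wᶜ ⊆ T)
    (hcard : ∀ T, u T ≠ 0 → T.card ≤ d)
    (hcocycle : ∀ T, wedge (charVec K W) u T ≠ 0 → ∃ s ∈ 𝓝, s ⊆ T ∩ W)
    (hcycle : contract (charVec K W) z = 0)
    (hface : ∀ T, z T ≠ 0 → ∀ s ∈ 𝓝, ¬ s ⊆ T ∩ W) (hpair : u ⬝ᵥ z ≠ 0) :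
    depthQuot (squarefreeIdeal K 𝓝) ≤ d := by
  set I := squarefreeIdeal K 𝓝
  refine csSup_le' ?_
  rintro _ ⟨rs, rfl, hmem, hreg⟩
  refine length_le_of_wedge_eq_zero (x := X) (u := I.mkQ ∘ strandLift W u) hmem
    hreg.toIsWeaklyRegular ?_ ?_ ?_
  · rw [wedge_comp, wedge_X_strandLift hcompl]
    ext1 T
    refine (Submodule.Quotient.mk_eq_zero I).mpr ?_
    rcases eq_or_ne (wedge (charVec K W) u T) 0 with h | h
    · simp only [strandLift, h, map_zero, zero_mem]
    · obtain ⟨s, hs, hsT⟩ := hcocycle T h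
      exact monomial_mem_squarefreeIdeal hs hsT _
  · intro y hy
    obtain ⟨y, rfl⟩ := I.mkQ_surjective.comp_left y
    have hdiff : ∀ T, (strandLift W u - wedge X y) T ∈ I := fun T => by
      rw [wedge_comp] at hy
      exact (Submodule.Quotient.eq I).mp (congrFun hy T)
    have hzero := strandCoeff_dotProduct_eq_zero hdiff hface
    rw [strandCoeff_sub, strandCoeff_strandLift, strandCoeff_wedge_X, sub_dotProduct,
      wedge_dotProduct, hcycle, dotProduct_zero, sub_zero] at hzero
    exact hpair hzero
  · intro T hT
    refine hcard T fun h => hT ?_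
    rw [Function.comp_apply, strandLift, h, map_zero, map_zero]

lemma depthQuot_squarefreeIdeal_le_card (hempty : ∅ ∉ 𝓝) :
    depthQuot (squarefreeIdeal K 𝓝) ≤ n := by
  have hzero : charVec K (∅ : Finset (Fin n)) = 0 := by
    ext v
    simp [charVec]
  refine depthQuot_squarefreeIdeal_le (W := ∅) (u := Pi.single Finset.univ 1)
    (z := Pi.single Finset.univ 1) ?_ (fun T _ => by simpa using T.card_le_univ) ?_ ?_ ?_ (by simp)
  · intro T hT
    have hT : T = Finset.univ := by simpa [Pi.single_apply] using hT
    simp [hT]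
  · simp [hzero]
  · simp [hzero]
  · intro T _ s hs hsT
    rw [Finset.inter_empty, Finset.subset_empty] at hsT
    exact hempty (hsT ▸ hs)

end Squarefree

section WedgeList

variable {ι R M : Type*} [LinearOrder ι] [CommRing R] [AddCommGroup M] [Module R M]
  {xs : List (ι → R)} {f : Finset ι → M} {T : Finset ι}

/-- The exterior product of the vectors in `xs`, in order, with `f`. -/
def wedgeList (xs : List (ι → R)) (f : Finset ι → M) : Finset ι → M :=
  xs.foldr (fun x g => wedge x g) f

lemma wedgeList_append (xs ys : List (ι → R)) (f : Finset ι → M) :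
    wedgeList (xs ++ ys) f = wedgeList xs (wedgeList ys f) :=
  List.foldr_append

lemma wedge_wedgeList_of_mem {x : ι → R} (hx : x ∈ xs) : wedge x (wedgeList xs f) = 0 := by
  induction xs with
  | nil => cases hx
  | cons y ys ih =>
    rw [wedgeList, List.foldr_cons]
    rcases List.mem_cons.mp hx with rfl | hx
    · exact wedge_self _ _
    · rw [wedge_wedge]
      exact (congrArg (fun g => -wedge y g) (ih hx)).trans (by simp)

lemma exists_mem_ne_zero_of_wedgeList_ne_zero (hT : wedgeList xs f T ≠ 0) {x : ι → R}
    (hx : x ∈ xs) : ∃ v ∈ T, x v ≠ 0 := by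
  induction xs generalizing T with
  | nil => cases hx
  | cons y ys ih =>
    obtain ⟨v, hvT, hyv, hrest⟩ := exists_of_wedge_ne_zero hT
    rcases List.mem_cons.mp hx with rfl | hx
    · exact ⟨v, hvT, hyv⟩
    · obtain ⟨w, hw, hxw⟩ := ih hrest hx
      exact ⟨w, Finset.mem_of_mem_erase hw, hxw⟩

lemma exists_subset_of_wedgeList_ne_zero (hT : wedgeList xs f T ≠ 0) :
    ∃ T' ⊆ T, f T' ≠ 0 ∧ (∀ v ∈ T, v ∉ T' → ∃ x ∈ xs, x v ≠ 0) ∧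
      ∀ A : Finset ι, (T ∩ A).card ≤ (T' ∩ A).card + xs.countP (fun x => ∃ v ∈ A, x v ≠ 0) := by
  induction xs generalizing T with
  | nil => exact ⟨T, Finset.Subset.rfl, hT, fun v hv hv' => absurd hv hv',
      fun A => Nat.le_add_right _ _⟩
  | cons x xs ih =>
    obtain ⟨v, hvT, hxv, hrest⟩ := exists_of_wedge_ne_zero hT
    obtain ⟨T', hsub, hfT', hfactor, hcard⟩ := ih hrest
    refine ⟨T', hsub.trans (Finset.erase_subset v T), hfT', fun w hwT hwT' => ?_, fun A => ?_⟩
    · rcases eq_or_ne w v with rfl | hwv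
      · exact ⟨x, List.mem_cons_self, hxv⟩
      · obtain ⟨y, hy, hyw⟩ := hfactor w (Finset.mem_erase.mpr ⟨hwv, hwT⟩) hwT'
        exact ⟨y, List.mem_cons_of_mem x hy, hyw⟩
    · have hA := hcard A
      rw [Finset.erase_inter] at hA
      by_cases hvA : v ∈ A
      · rw [Finset.card_erase_of_mem (Finset.mem_inter.mpr ⟨hvT, hvA⟩)] at hA
        rw [List.countP_cons, if_pos (decide_eq_true (⟨v, hvA, hxv⟩ : ∃ w ∈ A, x w ≠ 0))]
        omega
      · rw [Finset.erase_eq_of_notMem fun h => hvA (Finset.mem_inter.mp h).2] at hA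
        rw [List.countP_cons]
        omega

variable [Fintype ι]

lemma contract_wedgeList_eq_zero {y : ι → R} (hf : contract y f = 0)
    (hxs : ∀ x ∈ xs, x ⬝ᵥ y = 0) : contract y (wedgeList xs f) = 0 := by
  induction xs with
  | nil => exact hf
  | cons x xs ih =>
    have h := wedge_contract x y (wedgeList xs f)
    rwa [ih fun x' hx' => hxs x' (List.mem_cons_of_mem _ hx'), hxs x List.mem_cons_self, map_zero,
      zero_smul, zero_add] at h

lemma contract_single_eq_zero {y : ι → R} {U : Finset ι} (hy : ∀ v ∈ U, y v = 0) (m : M) :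
    contract y (Pi.single U m) = 0 := by
  ext T
  by_contra hT
  obtain ⟨v, -, hyv, hU⟩ := exists_of_contract_ne_zero hT
  have hU : insert v T = U := by
    by_contra hne
    simp [hne] at hU
  exact hyv (hy v (hU ▸ Finset.mem_insert_self v T))

/-- The Gram matrix of the two lists is unitriangular, so it has determinant `1`. -/
lemma wedgeList_dotProduct_wedgeList {ps : List ((ι → R) × (ι → R))} {f g : Finset ι → R}
    (hdiag : ∀ p ∈ ps, p.1 ⬝ᵥ p.2 = 1) (htri : ps.Pairwise fun p q => q.1 ⬝ᵥ p.2 = 0)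
    (hf : ∀ p ∈ ps, contract p.2 f = 0) :
    wedgeList (ps.map Prod.fst) f ⬝ᵥ wedgeList (ps.map Prod.snd) g = f ⬝ᵥ g := by
  induction ps with
  | nil => rfl
  | cons p ps ih =>
    obtain ⟨hp, htri⟩ := List.pairwise_cons.mp htri
    simp only [List.forall_mem_cons] at hdiag hf
    have hcontract : contract p.2 (wedge p.1 (wedgeList (ps.map Prod.fst) f)) =
        wedgeList (ps.map Prod.fst) f := by
      have h := wedge_contract p.1 p.2 (wedgeList (ps.map Prod.fst) f)
      rwa [contract_wedgeList_eq_zero hf.1 (by simpa using fun x y hxy => hp (x, y) hxy), map_zero,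
        zero_add, hdiag.1, one_smul] at h
    calc wedgeList ((p :: ps).map Prod.fst) f ⬝ᵥ wedgeList ((p :: ps).map Prod.snd) g
        = wedge p.2 (wedgeList (ps.map Prod.snd) g) ⬝ᵥ
            wedge p.1 (wedgeList (ps.map Prod.fst) f) := dotProduct_comm _ _
      _ = wedgeList (ps.map Prod.fst) f ⬝ᵥ wedgeList (ps.map Prod.snd) g := by
          rw [wedge_dotProduct, hcontract, dotProduct_comm]
      _ = f ⬝ᵥ g := ih hdiag.2 htri hf.2

end WedgeList

section Matching

variable {V τ : Type*} {G : SimpleGraph V}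

lemma isMatchingSet_image {B : Finset τ} {e : τ → Sym2 V} (hedge : ∀ t ∈ B, e t ∈ G.edgeSet)
    (hinj : ∀ s ∈ B, ∀ t ∈ B, ∀ v ∈ e s, v ∈ e t → s = t) :
    IsMatchingSet G (B.image e) ∧ (B.image e).card = B.card := by
  refine ⟨⟨?_, ?_⟩, Finset.card_image_of_injOn fun s hs t ht hst => ?_⟩
  · simpa using hedge
  · simp only [Finset.forall_mem_image]
    exact fun s hs t ht hne v hvs hvt => hne (congrArg e (hinj s hs t ht v hvs hvt))
  · have hmem := Sym2.out_fst_mem (e s)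
    exact hinj s hs t ht _ hmem (hst ▸ hmem)

variable [Fintype V]

/-- The vertices covered by the edges in `M`. -/
def coveredVertices (M : Finset (Sym2 V)) : Finset V :=
  Finset.univ.filter fun v => ∃ e ∈ M, v ∈ e

lemma mem_coveredVertices {M : Finset (Sym2 V)} {v : V} :
    v ∈ coveredVertices M ↔ ∃ e ∈ M, v ∈ e := by
  simp [coveredVertices]

lemma IsMatchingSet.card_coveredVertices {M : Finset (Sym2 V)} (hM : IsMatchingSet G M) :
    (coveredVertices M).card = 2 * M.card := by
  have hcover : coveredVertices M = M.biUnion fun e => e.toFinset := by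
    ext v
    simp [mem_coveredVertices]
  rw [hcover, Finset.card_biUnion, Finset.sum_const_nat (m := 2), mul_comm]
  · exact fun e he => Sym2.card_toFinset_of_not_isDiag e (G.not_isDiag_of_mem_edgeSet (hM.1 e he))
  · intro e he f hf hef
    rw [Function.onFun, Finset.disjoint_left]
    simpa only [Sym2.mem_toFinset] using hM.2 e he f hf hef

lemma IsMatchingSet.exists_adj_mem_coveredVertices {M : Finset (Sym2 V)} (hM : IsMatchingSet G M)
    {v : V} (hv : v ∈ coveredVertices M) : ∃ w ∈ coveredVertices M, G.Adj v w := by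
  obtain ⟨e, he, hve⟩ := mem_coveredVertices.mp hv
  obtain ⟨w, rfl⟩ := hve
  exact ⟨w, mem_coveredVertices.mpr ⟨_, he, Sym2.mem_mk_right v w⟩, hM.1 _ he⟩

lemma le_matchingNumber {M : Finset (Sym2 V)} (hM : IsMatchingSet G M) :
    M.card ≤ matchingNumber G :=
  le_csSup ⟨Fintype.card (Sym2 V), by rintro _ ⟨M, -, rfl⟩; exact M.card_le_univ⟩ ⟨M, hM, rfl⟩

/-- The vertex sets of the `k`-matchings of `G`. -/
def matchingSupports (G : SimpleGraph V) (k : ℕ) : Set (Finset V) :=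
  coveredVertices '' {M | IsMatchingSet G M ∧ M.card = k}

end Matching

lemma edgeIdealSqPow_eq_squarefreeIdeal (K : Type*) [Field K] {n : ℕ} (G : SimpleGraph (Fin n))
    (k : ℕ) : edgeIdealSqPow K G k = squarefreeIdeal K (matchingSupports G k) := by
  have hcovered : ∀ M : Finset (Sym2 (Fin n)),
      Finset.univ.filter (fun v => ∃ e ∈ M, v ∈ e) = coveredVertices M := by
    intro M
    ext v
    simp [mem_coveredVertices]
  simp only [edgeIdealSqPow, squarefreeIdeal, matchingSupports, Set.image_image, hcovered]
  congr 1
  ext f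
  simp [and_assoc, eq_comm]

/-- A family of vertex-disjoint stars in `G`, not necessarily induced, each with a marked leaf.
The vertex set `star t` includes the center. -/
structure StarSystem {V : Type*} (G : SimpleGraph V) (τ : Type*) where
  center : τ → V
  leaf : τ → V
  star : τ → Finset V
  center_mem : ∀ t, center t ∈ star t
  leaf_mem : ∀ t, leaf t ∈ star t
  leaf_ne_center : ∀ t, leaf t ≠ center t
  adj : ∀ t, ∀ v ∈ star t, v ≠ center t → G.Adj (center t) v
  disjoint : Pairwise (Function.onFun Disjoint star)

namespace StarSystem

section Basic

variable {V τ : Type*} {G : SimpleGraph V} (S : StarSystem G τ) {s t : τ} {v : V}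

variable {S} in
lemma eq_of_mem_star (hs : v ∈ S.star s) (ht : v ∈ S.star t) : s = t := by
  by_contra hne
  exact Finset.disjoint_left.mp (S.disjoint hne) hs ht

variable [DecidableEq V]

/-- The vertices of the star with index `t` other than its center. -/
def leaves (t : τ) : Finset V := (S.star t).erase (S.center t)

/-- The two ends of the marked edge of the star with index `t`. -/
def edge (t : τ) : Finset V := {S.center t, S.leaf t}

/-- No edge of `G` joins the marked edge of the star with index `t` to another marked edge. -/
def IsIsolated (t : τ) : Prop :=
  ∀ s ≠ t, ∀ a ∈ S.edge t, ∀ b ∈ S.edge s, ¬ G.Adj a b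

/-- The union of all stars of the system. -/
def vertices [Fintype τ] : Finset V := Finset.univ.biUnion S.star

lemma leaf_mem_leaves (t : τ) : S.leaf t ∈ S.leaves t :=
  Finset.mem_erase.mpr ⟨S.leaf_ne_center t, S.leaf_mem t⟩

lemma edge_subset_star (t : τ) : S.edge t ⊆ S.star t := by
  simp [edge, Finset.insert_subset_iff, S.center_mem, S.leaf_mem]

lemma mem_vertices [Fintype τ] : v ∈ S.vertices ↔ ∃ t, v ∈ S.star t := by
  simp [vertices]

variable {S} in
lemma exists_matchingSupport_subset [Fintype V] [Fintype τ] {B : Finset τ} {T : Finset V}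
    (hcenter : ∀ t ∈ B, S.center t ∈ T) (hleaf : ∀ t ∈ B, ∃ v ∈ T, v ∈ S.leaves t) :
    ∃ s ∈ matchingSupports G B.card, s ⊆ T ∩ S.vertices := by
  have hleaf : ∀ t, ∃ v, t ∈ B → v ∈ T ∧ v ∈ S.leaves t := fun t => by
    by_cases ht : t ∈ B
    · simpa [ht] using hleaf t ht
    · exact ⟨S.center t, fun h => absurd h ht⟩
  choose m hm using hleaf
  have hmstar : ∀ t ∈ B, m t ∈ S.star t := fun t ht => Finset.mem_of_mem_erase (hm t ht).2
  have hstar : ∀ t ∈ B, ∀ v ∈ s(S.center t, m t), v ∈ S.star t := by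
    intro t ht v hv
    rcases Sym2.mem_iff.mp hv with rfl | rfl
    exacts [S.center_mem t, hmstar t ht]
  obtain ⟨hM, hcard⟩ := isMatchingSet_image (G := G) (e := fun t => s(S.center t, m t))
    (fun t ht => S.adj t (m t) (hmstar t ht) (Finset.ne_of_mem_erase (hm t ht).2))
    (fun s hs t ht v hvs hvt => eq_of_mem_star (hstar s hs v hvs) (hstar t ht v hvt))
  refine ⟨_, ⟨_, ⟨hM, hcard⟩, rfl⟩, fun v hv => ?_⟩
  simp only [mem_coveredVertices, Finset.exists_mem_image] at hv
  obtain ⟨t, ht, hvt⟩ := hv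
  refine Finset.mem_inter.mpr ⟨?_, S.mem_vertices.mpr ⟨t, hstar t ht v hvt⟩⟩
  rcases Sym2.mem_iff.mp hvt with rfl | rfl
  exacts [hcenter t ht, (hm t ht).1]

end Basic

section Vectors

variable {V τ : Type*} [LinearOrder V] {G : SimpleGraph V} (S : StarSystem G τ)
  (K : Type*) [CommRing K]

/-- The basis vector of the center of the star with index `t`. -/
def centerVec (t : τ) : V → K := Pi.single (S.center t) 1

/-- The basis vector of the marked leaf of the star with index `t`. -/
def leafVec (t : τ) : V → K := Pi.single (S.leaf t) 1

/-- The sum of the basis vectors of all leaves of the star with index `t`. -/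
def leavesVec (t : τ) : V → K := charVec K (S.leaves t)

lemma charVec_star (t : τ) : charVec K (S.star t) = S.centerVec K t + S.leavesVec K t := by
  ext v
  rcases eq_or_ne v (S.center t) with rfl | hv
  · simp [charVec, centerVec, leavesVec, leaves, S.center_mem]
  · simp [charVec, centerVec, leavesVec, leaves, hv]

lemma charVec_vertices [Fintype τ] : charVec K S.vertices = ∑ t, charVec K (S.star t) := by
  ext v
  rw [Finset.sum_apply]
  by_cases hv : v ∈ S.vertices
  · obtain ⟨t, ht⟩ := S.mem_vertices.mp hv
    have hoff : ∀ s ≠ t, charVec K (S.star s) v = 0 := fun s hst =>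
      if_neg fun hs => hst (eq_of_mem_star hs ht)
    rw [Finset.sum_eq_single t (fun s _ => hoff s) (fun h => absurd (Finset.mem_univ t) h)]
    simp [charVec, hv, ht]
  · have hstar : ∀ t, v ∉ S.star t := fun t ht => hv (S.mem_vertices.mpr ⟨t, ht⟩)
    simp [charVec, hv, hstar]

variable {S K} in
lemma mem_edge_of_centerVec_apply_ne_zero {t : τ} {v : V} (hv : S.centerVec K t v ≠ 0) :
    v ∈ S.edge t := by
  rw [centerVec, Pi.single_apply, ite_ne_right_iff] at hv
  exact Finset.mem_insert.mpr (.inl hv.1)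

variable {S K} in
lemma mem_edge_of_leafVec_apply_ne_zero {t : τ} {v : V} (hv : S.leafVec K t v ≠ 0) :
    v ∈ S.edge t := by
  rw [leafVec, Pi.single_apply, ite_ne_right_iff] at hv
  exact Finset.mem_insert_of_mem (Finset.mem_singleton.mpr hv.1)

variable [Fintype V]

lemma centerVec_dotProduct_centerVec (s t : τ) :
    S.centerVec K s ⬝ᵥ S.centerVec K t = if s = t then 1 else 0 := by
  have hinj : S.center t = S.center s ↔ s = t :=
    ⟨fun h => eq_of_mem_star (S.center_mem s) (h ▸ S.center_mem t), fun h => h ▸ rfl⟩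
  simp [centerVec, Pi.single_apply, hinj]

lemma centerVec_dotProduct_leafVec (s t : τ) : S.centerVec K s ⬝ᵥ S.leafVec K t = 0 := by
  have hne : S.leaf t ≠ S.center s := fun h => S.leaf_ne_center t <| by
    rw [h, eq_of_mem_star (S.center_mem s) (h ▸ S.leaf_mem t)]
  simp [centerVec, leafVec, hne]

lemma leavesVec_dotProduct_centerVec (s t : τ) : S.leavesVec K s ⬝ᵥ S.centerVec K t = 0 := by
  have hnot : S.center t ∉ S.leaves s := fun h => Finset.ne_of_mem_erase h <| by
    rw [eq_of_mem_star (Finset.mem_of_mem_erase h) (S.center_mem t)]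
  simp [leavesVec, centerVec, charVec, hnot]

lemma leavesVec_dotProduct_leafVec (s t : τ) :
    S.leavesVec K s ⬝ᵥ S.leafVec K t = if s = t then 1 else 0 := by
  have hmem : S.leaf t ∈ S.leaves s ↔ s = t :=
    ⟨fun h => eq_of_mem_star (Finset.mem_of_mem_erase h) (S.leaf_mem t),
      fun h => h ▸ S.leaf_mem_leaves s⟩
  simp [leavesVec, leafVec, charVec, hmem]

variable [Fintype τ]

lemma charVec_vertices_dotProduct_centerVec (t : τ) :
    charVec K S.vertices ⬝ᵥ S.centerVec K t = 1 := by
  simp [centerVec, charVec, S.mem_vertices.mpr ⟨t, S.center_mem t⟩]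

lemma charVec_vertices_dotProduct_leafVec (t : τ) :
    charVec K S.vertices ⬝ᵥ S.leafVec K t = 1 := by
  simp [leafVec, charVec, S.mem_vertices.mpr ⟨t, S.leaf_mem t⟩]

/-- The exterior monomial of the vertices outside the system. -/
def base : Finset V → K := Pi.single S.verticesᶜ 1

lemma eq_of_base_ne_zero {T : Finset V} (hT : S.base K T ≠ 0) : T = S.verticesᶜ := by
  by_contra hne
  exact hT (Pi.single_eq_of_ne hne 1)

lemma contract_centerVec_base (t : τ) : contract (S.centerVec K t) (S.base K) = 0 := by
  refine contract_single_eq_zero (fun v hv => Pi.single_eq_of_ne ?_ 1) 1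
  rintro rfl
  exact Finset.mem_compl.mp hv (S.mem_vertices.mpr ⟨t, S.center_mem t⟩)

lemma contract_leafVec_base (t : τ) : contract (S.leafVec K t) (S.base K) = 0 := by
  refine contract_single_eq_zero (fun v hv => Pi.single_eq_of_ne ?_ 1) 1
  rintro rfl
  exact Finset.mem_compl.mp hv (S.mem_vertices.mpr ⟨t, S.leaf_mem t⟩)

end Vectors

section Cochain

variable {V τ : Type*} [LinearOrder V] {G : SimpleGraph V} (S : StarSystem G τ)
  (K : Type*) [CommRing K] {as bs : List τ} {i : τ} {T : Finset V}

/-- The factors of `cochain`. -/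
def cochainVectors (as : List τ) (i : τ) (bs : List τ) : List (V → K) :=
  as.map (S.centerVec K) ++ S.centerVec K i ::
    bs.flatMap fun s => [S.leavesVec K s, S.centerVec K s]

lemma length_cochainVectors :
    (S.cochainVectors K as i bs).length = as.length + 1 + 2 * bs.length := by
  simp [cochainVectors, List.length_flatMap]
  ring

lemma centerVec_mem_cochainVectors {t : τ} (ht : t ∈ as ++ i :: bs) :
    S.centerVec K t ∈ S.cochainVectors K as i bs := by
  simp only [List.mem_append, List.mem_cons] at ht
  simp only [cochainVectors, List.mem_append, List.mem_map, List.mem_cons, List.mem_flatMap]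
  rcases ht with ht | rfl | ht
  exacts [.inl ⟨t, ht, rfl⟩, .inr (.inl rfl), .inr (.inr ⟨t, ht, by simp⟩)]

lemma leavesVec_mem_cochainVectors {t : τ} (ht : t ∈ bs) :
    S.leavesVec K t ∈ S.cochainVectors K as i bs := by
  simp only [cochainVectors, List.mem_append, List.mem_cons, List.mem_flatMap]
  exact .inr (.inr ⟨t, ht, by simp⟩)

variable [Fintype V] [Fintype τ]

/-- The product of the centers of the stars in `as`, the center of the star `i`, both the center
and the sum of leaves of each star in `bs`, and all vertices outside the system. -/
def cochain (as : List τ) (i : τ) (bs : List τ) : Finset V → K :=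
  wedgeList (S.cochainVectors K as i bs) (S.base K)

variable {K}

lemma support_cochain (hT : S.cochain K as i bs T ≠ 0) :
    S.verticesᶜ ⊆ T ∧ T.card ≤ S.verticesᶜ.card + (as.length + 1 + 2 * bs.length) := by
  obtain ⟨T', hsub, hbase, -, hcard⟩ := exists_subset_of_wedgeList_ne_zero hT
  obtain rfl := S.eq_of_base_ne_zero K hbase
  refine ⟨hsub, (by simpa using hcard Finset.univ : T.card ≤ _).trans ?_⟩
  rw [← S.length_cochainVectors K]
  exact Nat.add_le_add_left List.countP_le_length _

lemma exists_center_leaf_mem_of_wedge_cochain_ne_zero (hall : ∀ t, t ∈ as ++ i :: bs)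
    (hT : wedge (charVec K S.vertices) (S.cochain K as i bs) T ≠ 0) :
    (∀ t, S.center t ∈ T) ∧ ∃ t ∉ bs, ∀ s ∈ t :: bs, ∃ v ∈ T, v ∈ S.leaves s := by
  rw [charVec_vertices, map_sum, LinearMap.sum_apply, Finset.sum_apply] at hT
  obtain ⟨t, -, ht⟩ := Finset.exists_ne_zero_of_sum_ne_zero hT
  rw [charVec_star, map_add, LinearMap.add_apply, cochain,
    wedge_wedgeList_of_mem (S.centerVec_mem_cochainVectors K (hall t)), zero_add] at ht
  have hfactor : ∀ x ∈ S.leavesVec K t :: S.cochainVectors K as i bs, ∃ v ∈ T, x v ≠ 0 :=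
    fun x hx => exists_mem_ne_zero_of_wedgeList_ne_zero (xs := _ :: _) ht hx
  have hleaf : ∀ s, S.leavesVec K s ∈ S.leavesVec K t :: S.cochainVectors K as i bs →
      ∃ v ∈ T, v ∈ S.leaves s := fun s hs => by
    obtain ⟨v, hvT, hv⟩ := hfactor _ hs
    exact ⟨v, hvT, by_contra fun h => hv (if_neg h)⟩
  refine ⟨fun s => ?_, t, fun htbs => ht ?_, fun s hs => hleaf s ?_⟩
  · obtain ⟨v, hvT, hv⟩ := hfactor _
      (List.mem_cons_of_mem _ (S.centerVec_mem_cochainVectors K (hall s)))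
    rw [centerVec, Pi.single_apply, ite_ne_right_iff] at hv
    exact hv.1 ▸ hvT
  · rw [wedge_wedgeList_of_mem (S.leavesVec_mem_cochainVectors K htbs), Pi.zero_apply]
  · rcases List.mem_cons.mp hs with rfl | hs
    exacts [List.mem_cons_self, List.mem_cons_of_mem _ (S.leavesVec_mem_cochainVectors K hs)]

lemma exists_matchingSupport_of_wedge_cochain_ne_zero (hall : ∀ t, t ∈ as ++ i :: bs)
    (hnodup : bs.Nodup) (hT : wedge (charVec K S.vertices) (S.cochain K as i bs) T ≠ 0) :
    ∃ s ∈ matchingSupports G (bs.length + 1), s ⊆ T ∩ S.vertices := by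
  obtain ⟨hcenter, t, ht, hleaf⟩ := S.exists_center_leaf_mem_of_wedge_cochain_ne_zero hall hT
  rw [← List.length_cons (a := t), ← List.toFinset_card_of_nodup (List.nodup_cons.mpr ⟨ht, hnodup⟩)]
  exact exists_matchingSupport_subset (fun s _ => hcenter s)
    fun s hs => hleaf s (List.mem_toFinset.mp hs)

end Cochain

section Cycle

variable {V τ : Type*} [Fintype V] [LinearOrder V] {G : SimpleGraph V} (S : StarSystem G τ)
  [Fintype τ] (K : Type*) [CommRing K]

/-- The product of the marked edges of the stars in `ks` and all vertices outside the system. -/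
def edgeCochain (ks : List τ) : Finset V → K :=
  wedgeList (ks.flatMap fun s => [S.leafVec K s, S.centerVec K s]) (S.base K)

/-- The join of the boundary of the simplex on the marked edges of the stars in `ks` with the
zero-dimensional spheres on the marked edges of the stars in `as`. -/
def cycle (as ks : List τ) : Finset V → K :=
  wedgeList (as.map fun t => S.centerVec K t - S.leafVec K t)
    (contract (charVec K S.vertices) (S.edgeCochain K ks))

lemma contract_cycle (as ks : List τ) :
    contract (charVec K S.vertices) (S.cycle K as ks) = 0 := by
  refine contract_wedgeList_eq_zero (contract_self _ _) ?_
  rw [List.forall_mem_map]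
  intro t _
  rw [dotProduct_comm, dotProduct_sub, charVec_vertices_dotProduct_centerVec,
    charVec_vertices_dotProduct_leafVec, sub_self]

lemma wedgeList_dotProduct_edgeCochain {i : τ} {bs : List τ} (hnodup : (i :: bs).Nodup) :
    wedgeList (charVec K S.vertices :: S.centerVec K i ::
      bs.flatMap fun s => [S.leavesVec K s, S.centerVec K s]) (S.base K) ⬝ᵥ
        S.edgeCochain K (i :: bs) = 1 := by
  obtain ⟨hi, hbs⟩ := List.nodup_cons.mp hnodup
  set ps := (charVec K S.vertices, S.leafVec K i) :: (S.centerVec K i, S.centerVec K i) ::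
    bs.flatMap fun s => [(S.leavesVec K s, S.leafVec K s), (S.centerVec K s, S.centerVec K s)]
    with hps
  have hdiag : ∀ p ∈ ps, p.1 ⬝ᵥ p.2 = 1 := by
    simp +contextual [hps, or_imp, charVec_vertices_dotProduct_leafVec,
      centerVec_dotProduct_centerVec, leavesVec_dotProduct_leafVec]
  have htri : ps.Pairwise fun p q => q.1 ⬝ᵥ p.2 = 0 := by
    have hne : ∀ s ∈ bs, s ≠ i := fun s hs => ne_of_mem_of_not_mem hs hi
    have hpairwise : bs.Pairwise fun s t => t = s → (1 : K) = 0 :=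
      hbs.imp fun hst hts => absurd hts.symm hst
    simpa +contextual [hps, or_imp, forall_and, List.pairwise_flatMap, hne,
      centerVec_dotProduct_centerVec, centerVec_dotProduct_leafVec, leavesVec_dotProduct_centerVec,
      leavesVec_dotProduct_leafVec] using hpairwise
  have hbase : ∀ p ∈ ps, contract p.2 (S.base K) = 0 := by
    simp +contextual [hps, or_imp, contract_centerVec_base, contract_leafVec_base]
  have hpair := wedgeList_dotProduct_wedgeList (g := S.base K) hdiag htri hbase
  simp only [hps, List.map_cons, List.map_flatMap, List.map_nil] at hpair
  rw [edgeCochain, List.flatMap_cons, List.cons_append, List.cons_append, List.nil_append, hpair]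
  simp [base]

lemma cochain_dotProduct_cycle {as bs : List τ} {i : τ} (hnodup : (as ++ i :: bs).Nodup) :
    S.cochain K as i bs ⬝ᵥ S.cycle K as (i :: bs) = 1 := by
  obtain ⟨has, hibs, hdisj⟩ := List.nodup_append.mp hnodup
  set ps := as.map fun t => (S.centerVec K t, S.centerVec K t - S.leafVec K t) with hps
  have hpair := wedgeList_dotProduct_wedgeList (ps := ps)
    (f := wedgeList (S.centerVec K i :: bs.flatMap fun s => [S.leavesVec K s, S.centerVec K s])
      (S.base K))
    (g := contract (charVec K S.vertices) (S.edgeCochain K (i :: bs))) ?_ ?_ ?_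
  · rw [cochain, cochainVectors, wedgeList_append, cycle]
    simp only [hps, List.map_map, Function.comp_def] at hpair
    rw [hpair, ← wedge_dotProduct]
    exact S.wedgeList_dotProduct_edgeCochain K hibs
  · simp [hps, dotProduct_sub, centerVec_dotProduct_centerVec, centerVec_dotProduct_leafVec]
  · refine List.pairwise_map.mpr (has.imp fun hst => ?_)
    simp [dotProduct_sub, centerVec_dotProduct_centerVec, centerVec_dotProduct_leafVec, hst.symm]
  · rw [hps, List.forall_mem_map]
    intro t ht
    have hne : ∀ s ∈ i :: bs, s ≠ t := fun s hs => (hdisj t ht s hs).symm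
    rw [List.forall_mem_cons] at hne
    refine contract_wedgeList_eq_zero ?_ ?_
    · rw [map_sub, LinearMap.sub_apply, contract_centerVec_base, contract_leafVec_base, sub_zero]
    · simp +contextual [or_imp, dotProduct_sub, centerVec_dotProduct_centerVec,
        centerVec_dotProduct_leafVec, leavesVec_dotProduct_centerVec, leavesVec_dotProduct_leafVec,
        hne]

variable {K} {as ks : List τ} {T : Finset V}

lemma support_edgeCochain (hT : S.edgeCochain K ks T ≠ 0) :
    (T ∩ S.vertices).card ≤ 2 * ks.length ∧ ∀ v ∈ T ∩ S.vertices, ∃ s ∈ ks, v ∈ S.edge s := by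
  obtain ⟨T', -, hbase, hfactor, hcard⟩ := exists_subset_of_wedgeList_ne_zero hT
  obtain rfl := S.eq_of_base_ne_zero K hbase
  constructor
  · refine (hcard S.vertices).trans ?_
    rw [Finset.inter_comm, Finset.inter_compl, Finset.card_empty, zero_add]
    refine List.countP_le_length.trans_eq ?_
    simp [List.length_flatMap, mul_comm]
  · intro v hv
    obtain ⟨hvT, hvW⟩ := Finset.mem_inter.mp hv
    obtain ⟨x, hx, hxv⟩ := hfactor v hvT fun h => Finset.mem_compl.mp h hvW
    simp only [List.mem_flatMap, List.mem_cons, List.not_mem_nil, or_false] at hx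
    obtain ⟨s, hs, rfl | rfl⟩ := hx
    exacts [⟨s, hs, mem_edge_of_leafVec_apply_ne_zero hxv⟩,
      ⟨s, hs, mem_edge_of_centerVec_apply_ne_zero hxv⟩]

lemma support_contract_edgeCochain
    (hT : contract (charVec K S.vertices) (S.edgeCochain K ks) T ≠ 0) :
    (T ∩ S.vertices).card < 2 * ks.length ∧ ∀ v ∈ T ∩ S.vertices, ∃ s ∈ ks, v ∈ S.edge s := by
  obtain ⟨v, hvT, hv, hins⟩ := exists_of_contract_ne_zero hT
  obtain ⟨hcard, hedge⟩ := S.support_edgeCochain hins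
  have hvW : v ∈ S.vertices := by_contra fun h => hv (if_neg h)
  rw [Finset.insert_inter_of_mem hvW] at hcard hedge
  rw [Finset.card_insert_of_notMem fun h => hvT (Finset.mem_inter.mp h).1] at hcard
  exact ⟨hcard, fun w hw => hedge w (Finset.mem_insert_of_mem hw)⟩

lemma exists_subset_of_cycle_ne_zero (hnodup : as.Nodup) (hT : S.cycle K as ks T ≠ 0) :
    ∃ T' ⊆ T, contract (charVec K S.vertices) (S.edgeCochain K ks) T' ≠ 0 ∧
      (∀ v ∈ T, v ∉ T' → ∃ t ∈ as, v ∈ S.edge t) ∧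
      ∀ t, (T ∩ S.edge t).card ≤ (T' ∩ S.edge t).card + 1 := by
  have hedge : ∀ t v, (S.centerVec K t - S.leafVec K t) v ≠ 0 → v ∈ S.edge t := by
    intro t v hv
    by_contra hvt
    rw [Pi.sub_apply, by_contra fun h => hvt (mem_edge_of_centerVec_apply_ne_zero (K := K) h),
      by_contra fun h => hvt (mem_edge_of_leafVec_apply_ne_zero (K := K) h), sub_zero] at hv
    exact hv rfl
  obtain ⟨T', hsub, hne, hfactor, hcard⟩ := exists_subset_of_wedgeList_ne_zero hT
  refine ⟨T', hsub, hne, fun v hvT hvT' => ?_, fun t => (hcard _).trans ?_⟩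
  · obtain ⟨x, hx, hxv⟩ := hfactor v hvT hvT'
    obtain ⟨t, ht, rfl⟩ := List.mem_map.mp hx
    exact ⟨t, ht, hedge t v hxv⟩
  · rw [List.countP_map]
    refine Nat.add_le_add_left (le_trans (List.countP_mono_left fun s _ hs => ?_)
      (List.nodup_iff_count_le_one.mp hnodup t)) _
    obtain ⟨v, hvt, hvs⟩ := of_decide_eq_true hs
    simpa using eq_of_mem_star (S.edge_subset_star s (hedge s v hvs)) (S.edge_subset_star t hvt)

lemma support_cycle (hnodup : (as ++ ks).Nodup) (hT : S.cycle K as ks T ≠ 0) :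
    ∃ T' : Finset V, (T' ∩ S.vertices).card < 2 * ks.length ∧
      (∀ v ∈ T ∩ S.vertices, ∃ t ∈ as ++ ks, v ∈ S.edge t) ∧
      (∀ v ∈ T, v ∉ T' → ∃ t ∈ as, v ∈ S.edge t) ∧ ∀ t ∈ as, (T ∩ S.edge t).card ≤ 1 := by
  obtain ⟨has, -, hdisj⟩ := List.nodup_append.mp hnodup
  obtain ⟨T', -, hT', hrest, hcard⟩ := S.exists_subset_of_cycle_ne_zero has hT
  obtain ⟨hlt, hedge⟩ := S.support_contract_edgeCochain hT'
  refine ⟨T', hlt, fun v hv => ?_, hrest, fun t ht => ?_⟩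
  · obtain ⟨hvT, hvW⟩ := Finset.mem_inter.mp hv
    by_cases hvT' : v ∈ T'
    · obtain ⟨s, hs, hvs⟩ := hedge v (Finset.mem_inter.mpr ⟨hvT', hvW⟩)
      exact ⟨s, List.mem_append_right as hs, hvs⟩
    · obtain ⟨t, ht, hvt⟩ := hrest v hvT hvT'
      exact ⟨t, List.mem_append_left ks ht, hvt⟩
  · have hempty : T' ∩ S.edge t = ∅ := by
      refine Finset.eq_empty_of_forall_notMem fun v hv => ?_
      obtain ⟨hvT', hvt⟩ := Finset.mem_inter.mp hv
      have hvt := S.edge_subset_star t hvt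
      obtain ⟨s, hs, hvs⟩ := hedge v (Finset.mem_inter.mpr ⟨hvT', S.mem_vertices.mpr ⟨t, hvt⟩⟩)
      exact hdisj t ht s hs (eq_of_mem_star hvt (S.edge_subset_star s hvs))
    simpa [hempty] using hcard t

/-- Inside a face of the cycle, a vertex on the marked edge of an isolated star of `as` has no
neighbour. Hence a matching inside the face lies in a proper subset of the marked edges of the
stars in `ks`, which has too few vertices. -/
lemma not_subset_of_cycle_ne_zero (hnodup : (as ++ ks).Nodup) (hiso : ∀ t ∈ as, S.IsIsolated t)
    (hT : S.cycle K as ks T ≠ 0) : ∀ s ∈ matchingSupports G ks.length, ¬ s ⊆ T ∩ S.vertices := by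
  rintro _ ⟨M, ⟨hM, hMcard⟩, rfl⟩ hcovered
  obtain ⟨T', hlt, hedge, hrest, hone⟩ := S.support_cycle hnodup hT
  have hface : coveredVertices M ⊆ T' ∩ S.vertices := by
    intro v hv
    obtain ⟨hvT, hvW⟩ := Finset.mem_inter.mp (hcovered hv)
    refine Finset.mem_inter.mpr ⟨by_contra fun hvT' => ?_, hvW⟩
    obtain ⟨t, ht, hvt⟩ := hrest v hvT hvT'
    obtain ⟨w, hw, hvw⟩ := hM.exists_adj_mem_coveredVertices hv
    obtain ⟨s, -, hws⟩ := hedge w (hcovered hw)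
    obtain rfl : s = t := by_contra fun hst => hiso t ht s hst v hvt w hws hvw
    have hwT := (Finset.mem_inter.mp (hcovered hw)).1
    exact hvw.ne (Finset.card_le_one.mp (hone s ht) v (Finset.mem_inter.mpr ⟨hvT, hvt⟩) w
      (Finset.mem_inter.mpr ⟨hwT, hws⟩))
  have hle := Finset.card_le_card hface
  rw [hM.card_coveredVertices] at hle
  omega

end Cycle

section Depth

variable {τ : Type*} [Fintype τ] {n : ℕ} {G : SimpleGraph (Fin n)} (S : StarSystem G τ)

theorem depthQuot_add_le (K : Type*) [Field K] {B : Finset τ} (hB : B.Nonempty)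
    (hiso : ∀ t ∉ B, S.IsIsolated t) :
    depthQuot (edgeIdealSqPow K G B.card) + S.vertices.card + 1 ≤
      n + Fintype.card τ + B.card := by
  obtain ⟨i, bs, hibs⟩ := List.exists_cons_of_ne_nil (Finset.toList_eq_nil.not.mpr hB.ne_empty)
  have hcardB : bs.length + 1 = B.card := by rw [← Finset.length_toList, hibs, List.length_cons]
  have hnodup : (Bᶜ.toList ++ i :: bs).Nodup := by
    rw [← hibs]
    refine List.nodup_append.mpr ⟨Finset.nodup_toList _, Finset.nodup_toList _, ?_⟩
    rintro t ht _ hs rfl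
    exact Finset.mem_compl.mp (Finset.mem_toList.mp ht) (Finset.mem_toList.mp hs)
  have hall : ∀ t, t ∈ Bᶜ.toList ++ i :: bs := by simp [← hibs, or_comm, em]
  have hbs : bs.Nodup := (List.nodup_cons.mp (List.nodup_append.mp hnodup).2.1).2
  have hface := fun T (hT : S.cycle K Bᶜ.toList (i :: bs) T ≠ 0) =>
    S.not_subset_of_cycle_ne_zero hnodup (fun t ht => hiso t (by simpa using ht)) hT
  have hdepth := depthQuot_squarefreeIdeal_le (K := K)
    (fun T hT => (S.support_cochain hT).1) (fun T hT => (S.support_cochain hT).2)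
    (fun T hT => S.exists_matchingSupport_of_wedge_cochain_ne_zero hall hbs hT)
    (S.contract_cycle K _ _) hface
    (by rw [S.cochain_dotProduct_cycle K hnodup]; exact one_ne_zero)
  rw [← edgeIdealSqPow_eq_squarefreeIdeal, hcardB, Finset.length_toList] at hdepth
  have hcompl := S.vertices.card_compl_add_card
  have hBcompl := B.card_compl_add_card
  rw [Fintype.card_fin] at hcompl
  omega

end Depth

end StarSystem

section InducedPath

variable {V : Type*} {G : SimpleGraph V} {r : ℕ} {p : Fin r → V}

lemma IsInducedPath.half_le_matchingNumber [Fintype V] (hp : IsInducedPath G p) :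
    r / 2 ≤ matchingNumber G := by
  let e : Fin (r / 2) → Sym2 V := fun i => s(p ⟨2 * i, by omega⟩, p ⟨2 * i + 1, by omega⟩)
  have hedge : ∀ i, e i ∈ G.edgeSet := fun i => (hp.2 _ _).mpr (.inl rfl)
  have hinj : ∀ i j, ∀ v ∈ e i, v ∈ e j → i = j := by
    intro i j v hvi hvj
    rcases Sym2.mem_iff.mp hvi with rfl | rfl <;> rcases Sym2.mem_iff.mp hvj with hij | hij
    all_goals
      have := Fin.ext_iff.mp (hp.1 hij)
      dsimp only at this
      omega
  obtain ⟨hM, hcard⟩ := isMatchingSet_image (B := Finset.univ) (fun i _ => hedge i)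
    (fun i _ j _ => hinj i j)
  simpa [hcard] using le_matchingNumber hM

lemma exists_isInducedPath_longestInducedPath [Fintype V] (G : SimpleGraph V) :
    ∃ p : Fin (longestInducedPath G) → V, IsInducedPath G p := by
  refine Nat.sSup_mem (s := {r | ∃ p : Fin r → V, IsInducedPath G p}) ?_ ?_
  · exact ⟨0, Fin.elim0, Function.injective_of_subsingleton _, fun i => i.elim0⟩
  · refine ⟨Fintype.card V, ?_⟩
    rintro r ⟨p, hp⟩
    simpa using Fintype.card_le_of_injective p hp.1

end InducedPath

/-- The first position of block number `t`, when a path is cut into consecutive blocks of which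
the first `m` have three vertices and all others have two. -/
def blockStart (m t : ℕ) : ℕ := 2 * t + min t m

lemma monotone_blockStart (m : ℕ) : Monotone (blockStart m) := fun s t hst => by
  unfold blockStart
  omega

namespace StarSystem

section InducedPath

variable {V : Type*} {G : SimpleGraph V} {r m N : ℕ} {p : Fin r → V}

/-- The positions in block number `t` of a path cut according to `blockStart`. -/
def pathBlock (hr : blockStart m N ≤ r) (t : Fin N) : Finset (Fin r) :=
  (Finset.Ico (blockStart m t) (blockStart m (t + 1))).attachFin fun _ hi =>
    (Finset.mem_Ico.mp hi).2.trans_le ((monotone_blockStart m t.isLt).trans hr)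

lemma mem_pathBlock {hr : blockStart m N ≤ r} {t : Fin N} {i : Fin r} :
    i ∈ pathBlock hr t ↔ blockStart m t ≤ i ∧ i < blockStart m (t + 1) := by
  rw [pathBlock, Finset.mem_attachFin, Finset.mem_Ico]

/-- The stars on the blocks of an induced path cut according to `blockStart`; a block of three
vertices is centered at its middle vertex, a block of two at its second vertex. -/
def ofInducedPath (hp : IsInducedPath G p) (hr : blockStart m N ≤ r) :
    StarSystem G (Fin N) where
  center t := p ⟨blockStart m t + 1, by have := t.isLt; unfold blockStart at *; omega⟩
  leaf t := p ⟨blockStart m t, by have := t.isLt; unfold blockStart at *; omega⟩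
  star t := (pathBlock hr t).map ⟨p, hp.1⟩
  center_mem t := Finset.mem_map_of_mem ⟨p, hp.1⟩ <| mem_pathBlock.mpr <| by
    unfold blockStart
    dsimp only
    omega
  leaf_mem t := Finset.mem_map_of_mem ⟨p, hp.1⟩ <| mem_pathBlock.mpr <| by
    unfold blockStart
    dsimp only
    omega
  leaf_ne_center t := hp.1.ne (by simp [Fin.ext_iff])
  adj t := by
    simp only [Finset.forall_mem_map, mem_pathBlock]
    intro i hi hne
    have hne : (i : ℕ) ≠ blockStart m t + 1 := fun h => hne (congrArg p (Fin.ext h))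
    refine (hp.2 _ _).mpr ?_
    unfold blockStart at *
    dsimp only
    omega
  disjoint s t hst := by
    refine (Finset.disjoint_map _).mpr (Finset.disjoint_left.mpr fun i hs ht => ?_)
    rw [mem_pathBlock] at hs ht
    unfold blockStart at *
    omega

variable [DecidableEq V]

lemma card_vertices_ofInducedPath (hp : IsInducedPath G p) (hr : blockStart m N ≤ r) :
    (ofInducedPath hp hr).vertices.card = blockStart m N := by
  rw [vertices, Finset.card_biUnion fun s _ t _ hst => (ofInducedPath hp hr).disjoint hst]
  simp only [ofInducedPath, pathBlock, Finset.card_map, Finset.card_attachFin, Nat.card_Ico]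
  rw [Fin.sum_univ_eq_sum_range (fun t => blockStart m (t + 1) - blockStart m t) N,
    Finset.sum_range_tsub (monotone_blockStart m)]
  simp [blockStart]

lemma isIsolated_ofInducedPath (hp : IsInducedPath G p) (hr : blockStart m N ≤ r) {t : Fin N}
    (ht : (t : ℕ) < m) : (ofInducedPath hp hr).IsIsolated t := by
  intro s hst a ha b hb
  simp only [edge, ofInducedPath, Finset.mem_insert, Finset.mem_singleton] at ha hb
  have hst : (s : ℕ) ≠ t := Fin.val_ne_of_ne hst
  rcases ha with rfl | rfl <;> rcases hb with rfl | rfl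
  all_goals
    rw [hp.2]
    unfold blockStart
    dsimp only
    omega

end InducedPath

end StarSystem

section Depth

variable {n r : ℕ} {G : SimpleGraph (Fin n)} {p : Fin r → Fin n}

lemma depthQuot_edgeIdealSqPow_le_card (K : Type*) [Field K] (G : SimpleGraph (Fin n)) {k : ℕ}
    (hk : 1 ≤ k) : depthQuot (edgeIdealSqPow K G k) ≤ n := by
  rw [edgeIdealSqPow_eq_squarefreeIdeal]
  refine depthQuot_squarefreeIdeal_le_card ?_
  rintro ⟨M, ⟨hM, hMcard⟩, hempty⟩
  have hcard := hM.card_coveredVertices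
  rw [hempty, Finset.card_empty] at hcard
  omega

lemma IsInducedPath.depthQuot_add_le (K : Type*) [Field K] (hp : IsInducedPath G p) {m N k : ℕ}
    (hr : blockStart m N ≤ r) (hk : 1 ≤ k) (hkN : k ≤ N) (hm : N - k ≤ m) :
    depthQuot (edgeIdealSqPow K G k) + blockStart m N + 1 ≤ n + N + k := by
  have hlt : ∀ t ∈ Finset.Ico (N - k) N, t < N := fun t ht => (Finset.mem_Ico.mp ht).2
  set B : Finset (Fin N) := (Finset.Ico (N - k) N).attachFin hlt with hB
  have hBcard : B.card = k := by
    rw [hB, Finset.card_attachFin, Nat.card_Ico, Nat.sub_sub_self hkN]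
  have hiso : ∀ t ∉ B, (StarSystem.ofInducedPath hp hr).IsIsolated t := by
    intro t ht
    refine StarSystem.isIsolated_ofInducedPath hp hr ?_
    rw [hB, Finset.mem_attachFin, Finset.mem_Ico] at ht
    omega
  have hdepth := (StarSystem.ofInducedPath hp hr).depthQuot_add_le K
    (Finset.card_pos.mp (hk.trans_eq hBcard.symm)) hiso
  rwa [StarSystem.card_vertices_ofInducedPath, Fintype.card_fin, hBcard] at hdepth

lemma IsInducedPath.gEdge_le_sub (K : Type*) [Field K] (hp : IsInducedPath G p) {k : ℕ}
    (hk : 1 ≤ k) (hlow : (r + 2) / 3 ≤ k) (hhigh : k ≤ r / 2) : gEdge K G k ≤ (n : ℤ) - r := by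
  have hblocks : blockStart (r - 2 * k) k = r := by
    unfold blockStart
    omega
  have hdepth := hp.depthQuot_add_le K hblocks.le hk le_rfl (by omega)
  rw [hblocks] at hdepth
  unfold gEdge
  omega

lemma IsInducedPath.gEdge_le_ceil_sub (K : Type*) [Field K] (hp : IsInducedPath G p) {k : ℕ}
    (hk : 1 ≤ k) (hkr : k ≤ (r + 2) / 3) :
    gEdge K G k ≤ ((3 * n - 2 * r + 2) / 3 : ℕ) - (k : ℤ) := by
  have hrn : r ≤ n := by simpa using Fintype.card_le_of_injective p hp.1
  rcases hkr.eq_or_lt with hkr | hkr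
  · rcases Nat.lt_or_ge r 2 with hr | hr
    · have hdepth := depthQuot_edgeIdealSqPow_le_card K G hk
      unfold gEdge
      omega
    · have hg := hp.gEdge_le_sub K hk hkr.ge (by omega)
      omega
  · -- As many triples as fit, then a pair if two vertices remain; a single one is left out.
    have hr : blockStart (r / 3) ((r + 1) / 3) ≤ r := by
      unfold blockStart
      omega
    have hdepth := hp.depthQuot_add_le K hr hk (by omega) (by omega)
    unfold gEdge
    unfold blockStart at hdepth
    omega

theorem stmt_16_general (K : Type*) [Field K] (hp : IsInducedPath G p) :
    r / 2 ≤ matchingNumber G ∧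
      (∀ k : ℕ, 1 ≤ k → k ≤ (r + 2) / 3 →
        gEdge K G k ≤ ((3 * n - 2 * r + 2) / 3 : ℕ) - (k : ℤ)) ∧
      (∀ k : ℕ, (r + 2) / 3 < k → k ≤ r / 2 → gEdge K G k ≤ (n : ℤ) - r) :=
  ⟨hp.half_le_matchingNumber, fun _ => hp.gEdge_le_ceil_sub K,
    fun _ hlow hhigh => hp.gEdge_le_sub K (Nat.one_le_of_lt hlow) hlow.le hhigh⟩

end Depth

/-- For a connected graph `G` on `n` vertices with `ℓ = ℓ(G)` the number of vertices of
a longest induced path: `ν(G) ≥ ⌊ℓ/2⌋`, and `g_{I(G)}(k) ≤ ⌈(3n-2ℓ)/3⌉ - k` for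
`1 ≤ k ≤ ⌈ℓ/3⌉`, while `g_{I(G)}(k) ≤ n - ℓ` for `⌈ℓ/3⌉ < k ≤ ⌊ℓ/2⌋`. -/
theorem stmt_16 (K : Type*) [Field K] {n : ℕ} (G : SimpleGraph (Fin n))
    (hconn : G.Connected) :
    longestInducedPath G / 2 ≤ matchingNumber G ∧
      (∀ k : ℕ, 1 ≤ k → k ≤ (longestInducedPath G + 2) / 3 →
        gEdge K G k ≤ ((3 * n - 2 * longestInducedPath G + 2) / 3 : ℕ) - (k : ℤ)) ∧
      (∀ k : ℕ, (longestInducedPath G + 2) / 3 < k → k ≤ longestInducedPath G / 2 →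
        gEdge K G k ≤ (n : ℤ) - longestInducedPath G) := by
  obtain ⟨p, hp⟩ := exists_isInducedPath_longestInducedPath G
  exact stmt_16_general K hp

end
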